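/- Let n ≥ 1 and let q ∈ ℂ be nonzero and not a root of unity. Then the trivial left 𝔥_n(q)-module ℂ_ε admits a finite free resolution 0 → P_{3n} → ⋯ → P_1 → P_0 → ℂ_ε → 0 of length 3n in which the k-th term P_k is a free left 𝔥_n(q)-module of rank Nat.choose (3n) k. -/

import Mathlib

noncomputable section

open scoped BigOperators

namespace QHeisenberg

/-- Index type for the `3n` generators: `x`-, `y`-, and `z`-variables. -/
abbrev GenIdx (n : ℕ) := Fin n ⊕ (Fin n ⊕ Fin n)

/-- The `x_i` generator in the free algebra. -/
def fX (n : ℕ) (i : Fin n) : FreeAlgebra ℂ (GenIdx n) := FreeAlgebra.ι ℂ (Sum.inl i)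

/-- The `y_i` generator in the free algebra. -/
def fY (n : ℕ) (i : Fin n) : FreeAlgebra ℂ (GenIdx n) := FreeAlgebra.ι ℂ (Sum.inr (Sum.inl i))

/-- The `z_i` generator in the free algebra. -/
def fZ (n : ℕ) (i : Fin n) : FreeAlgebra ℂ (GenIdx n) := FreeAlgebra.ι ℂ (Sum.inr (Sum.inr i))

/-- The defining relations of the q-Heisenberg algebra `𝔥_n(q)`. -/
inductive Rel (n : ℕ) (q : ℂ) :
    FreeAlgebra ℂ (GenIdx n) → FreeAlgebra ℂ (GenIdx n) → Prop
  | xx (i j : Fin n) : Rel n q (fX n i * fX n j) (fX n j * fX n i)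
  | yy (i j : Fin n) : Rel n q (fY n i * fY n j) (fY n j * fY n i)
  | zz (i j : Fin n) : Rel n q (fZ n i * fZ n j) (fZ n j * fZ n i)
  | xz (i : Fin n) : Rel n q (fX n i * fZ n i) (q • (fZ n i * fX n i))
  | yz (i : Fin n) : Rel n q (fY n i * fZ n i) (q⁻¹ • (fZ n i * fY n i))
  | xy (i : Fin n) : Rel n q (fX n i * fY n i) (q⁻¹ • (fY n i * fX n i) + fZ n i)
  | xyne (i j : Fin n) : i ≠ j → Rel n q (fX n i * fY n j) (fY n j * fX n i)
  | xzne (i j : Fin n) : i ≠ j → Rel n q (fX n i * fZ n j) (fZ n j * fX n i)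
  | yzne (i j : Fin n) : i ≠ j → Rel n q (fY n i * fZ n j) (fZ n j * fY n i)

/-- The q-Heisenberg algebra `𝔥_n(q)`. -/
abbrev H (n : ℕ) (q : ℂ) := RingQuot (Rel n q)

/-- The generator `x_i` of `𝔥_n(q)`. -/
def X (n : ℕ) (q : ℂ) (i : Fin n) : H n q := RingQuot.mkAlgHom ℂ (Rel n q) (fX n i)

/-- The generator `y_i` of `𝔥_n(q)`. -/
def Y (n : ℕ) (q : ℂ) (i : Fin n) : H n q := RingQuot.mkAlgHom ℂ (Rel n q) (fY n i)

/-- The generator `z_i` of `𝔥_n(q)`. -/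
def Z (n : ℕ) (q : ℂ) (i : Fin n) : H n q := RingQuot.mkAlgHom ℂ (Rel n q) (fZ n i)

/-- `q` is not a root of unity: `q ^ k ≠ 1` for every `k ≥ 1`. -/
def NotRootOfUnity (q : ℂ) : Prop := ∀ k : ℕ, 1 ≤ k → q ^ k ≠ 1

end QHeisenberg

namespace QHeisenberg

open CategoryTheory

/-- The augmentation homomorphism `ε : 𝔥_n(q) → ℂ` sending every generator to `0`. -/
def eps (n : ℕ) (q : ℂ) : H n q →ₐ[ℂ] ℂ :=
  RingQuot.liftAlgHom ℂ ⟨FreeAlgebra.lift ℂ (fun _ => (0 : ℂ)), by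
    intro a b h
    induction h <;> simp [fX, fY, fZ]⟩

/-- The trivial left `𝔥_n(q)`-module `ℂ_ε`: the complex numbers, with every generator
acting by `0` (restriction of scalars along `ε`). -/
def trivMod (n : ℕ) (q : ℂ) : ModuleCat (H n q) :=
  (ModuleCat.restrictScalars (eps n q).toRingHom).obj (ModuleCat.of ℂ ℂ)

end QHeisenberg

/-!
List the generators in the order `x_1, y_1, z_1, x_2, y_2, z_2, …`. The defining relations rewrite
the product of two generators in the wrong order as a combination of a product in the right order
and of a larger generator, so the ordered monomials span `𝔥_n(q)`; applied to the monomial `1`, the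
representation on Laurent monomials in `x`, `y`, `z` sends them to distinct basis vectors, so they
form a basis.

For each generator `g`, let `J` be the left ideal generated by the generators larger than `g`. It
has the monomials involving a larger generator as a basis. Reading off leading factors shows
that `J * g ⊆ J` and that right multiplication by `g` is injective on `𝔥_n(q) ⧸ J`. Hence
`0 → 𝔥_n(q) ⧸ J → 𝔥_n(q) ⧸ J → 𝔥_n(q) ⧸ (J + 𝔥_n(q) * g) → 0` is exact, and the mapping cone of a
lift of the first map resolves the third term. Starting from `𝔥_n(q)` itself and adding the
generators from the largest to the smallest, each of the `3n` steps turns ranks `a k` into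
`a k + a (k - 1)`, which is Pascal's rule.
-/

open CategoryTheory

universe u

section FreeResolution

variable {R : Type u} [Ring R]

/-- `HasFreeResolution R N a M` says that `M` has a resolution by free modules whose `k`-th term
has rank `a k` and whose terms of index at least `N` vanish. It is encoded through syzygies: `M` is
covered by `R ^ a 0`, and the kernel of the cover is resolved recursively. -/
def HasFreeResolution (R : Type u) [Ring R] :
    ℕ → (ℕ → ℕ) → (M : Type u) → [AddCommGroup M] → [Module R M] → Prop
  | 0, a, M, _, _ => Subsingleton M ∧ ∀ k, a k = 0
  | N + 1, a, M, _, _ => ∃ f : (Fin (a 0) → R) →ₗ[R] M, Function.Surjective f ∧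
      HasFreeResolution R N (fun k => a (k + 1)) (LinearMap.ker f)

section ShortExact

variable {K L A P Q : Type*} [AddCommGroup K] [Module R K] [AddCommGroup L] [Module R L]
  [AddCommGroup A] [Module R A] [AddCommGroup P] [Module R P] [AddCommGroup Q] [Module R Q]
  {i : K →ₗ[R] L} {p : L →ₗ[R] A}

lemma surjective_coprod_of_exact (hip : Function.Exact i p) {f : P →ₗ[R] K} {l : Q →ₗ[R] L}
    (hf : Function.Surjective f) (hl : Function.Surjective (p ∘ₗ l)) :
    Function.Surjective ((i ∘ₗ f).coprod l) := by
  intro x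
  obtain ⟨y, hy⟩ := hl (p x)
  obtain ⟨k, hk⟩ := (hip (x - l y)).1 (by rw [map_sub, sub_eq_zero]; exact hy.symm)
  obtain ⟨u, rfl⟩ := hf k
  exact ⟨(u, y), by simp [hk]⟩

lemma exists_shortExact_ker_coprod (hi : Function.Injective i) (hip : Function.Exact i p)
    {f : P →ₗ[R] K} (hf : Function.Surjective f) (l : Q →ₗ[R] L) :
    ∃ (j : LinearMap.ker f →ₗ[R] LinearMap.ker ((i ∘ₗ f).coprod l))
      (r : LinearMap.ker ((i ∘ₗ f).coprod l) →ₗ[R] LinearMap.ker (p ∘ₗ l)),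
      Function.Injective j ∧ Function.Surjective r ∧ Function.Exact j r := by
  have hpi (k : K) : p (i k) = 0 := hip.apply_apply_eq_zero k
  refine ⟨(LinearMap.inl R P Q).restrict fun u hu => ?_,
    (LinearMap.snd R P Q).restrict fun x hx => ?_, ?_, ?_, ?_⟩
  · simpa using congrArg i (LinearMap.mem_ker.1 hu)
  · simpa [hpi] using congrArg p (LinearMap.mem_ker.1 hx)
  · intro u v huv
    exact Subtype.ext (congrArg (fun x => x.1.1) huv)
  · rintro ⟨y, hy⟩
    obtain ⟨k, hk⟩ := (hip (l y)).1 hy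
    obtain ⟨u, rfl⟩ := hf k
    exact ⟨⟨(-u, y), by simp [hk]⟩, rfl⟩
  · rintro ⟨⟨u, y⟩, hx⟩
    constructor
    · intro hy
      obtain rfl : y = 0 := congrArg Subtype.val hy
      refine ⟨⟨u, hi ?_⟩, rfl⟩
      simpa using hx
    · rintro ⟨v, hv⟩
      exact Subtype.ext (congrArg (fun x => x.1.2) hv).symm

lemma exists_shortExact_ker_comp (hi : Function.Injective i) (hip : Function.Exact i p)
    {f : P →ₗ[R] L} (hf : Function.Surjective f) :
    ∃ (j : LinearMap.ker f →ₗ[R] LinearMap.ker (p ∘ₗ f)) (r : LinearMap.ker (p ∘ₗ f) →ₗ[R] K),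
      Function.Injective j ∧ Function.Surjective r ∧ Function.Exact j r := by
  let e := LinearEquiv.ofInjective i hi
  let s : LinearMap.ker (p ∘ₗ f) →ₗ[R] LinearMap.range i := f.restrict fun x hx => (hip _).1 hx
  refine ⟨Submodule.inclusion (LinearMap.ker_le_ker_comp f p), e.symm.toLinearMap ∘ₗ s,
    Submodule.inclusion_injective _, e.symm.surjective.comp ?_, fun x => ?_⟩
  · rintro ⟨_, k, rfl⟩
    obtain ⟨x, hx⟩ := hf (i k)
    exact ⟨⟨x, by simp [hx, hip.apply_apply_eq_zero]⟩, Subtype.ext hx⟩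
  · have hs : e.symm (s x) = 0 ↔ f x = 0 :=
      e.symm.map_eq_zero_iff.trans (Subtype.ext_iff (a2 := (0 : LinearMap.range i)))
    exact hs.trans ⟨fun hx => ⟨⟨x, hx⟩, rfl⟩, by rintro ⟨y, rfl⟩; exact y.2⟩

end ShortExact

namespace HasFreeResolution

variable {N : ℕ} {a b : ℕ → ℕ} {K L M M' F : Type u} [AddCommGroup K] [Module R K]
  [AddCommGroup L] [Module R L] [AddCommGroup M] [Module R M] [AddCommGroup M'] [Module R M']
  [AddCommGroup F] [Module R F]

lemma congr (e : M ≃ₗ[R] M') (h : HasFreeResolution R N a M) : HasFreeResolution R N a M' := by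
  cases N with
  | zero => exact ⟨have := h.1; e.symm.toEquiv.subsingleton, h.2⟩
  | succ N =>
    obtain ⟨f, hf, hker⟩ := h
    refine ⟨e.toLinearMap ∘ₗ f, e.surjective.comp hf, ?_⟩
    rwa [LinearEquiv.ker_comp]

lemma of_surjective (e : (Fin (a 0) → R) ≃ₗ[R] F) {f : F →ₗ[R] M} (hf : Function.Surjective f)
    (h : HasFreeResolution R N (fun k => a (k + 1)) (LinearMap.ker f)) :
    HasFreeResolution R (N + 1) a M := by
  refine ⟨f ∘ₗ e.toLinearMap, hf.comp e.surjective, ?_⟩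
  rw [LinearMap.ker_comp]
  exact h.congr (e.ofSubmodule' _).symm

lemma succ (h : HasFreeResolution R N a M) : HasFreeResolution R (N + 1) a M := by
  induction N generalizing a M with
  | zero =>
    obtain ⟨hM, ha⟩ := h
    have : IsEmpty (Fin (a 0)) := by rw [ha]; infer_instance
    exact ⟨0, fun x => ⟨0, Subsingleton.elim _ _⟩, inferInstance, fun k => ha _⟩
  | succ N ih =>
    obtain ⟨f, hf, hker⟩ := h
    exact ⟨f, hf, ih hker⟩

lemma horseshoe {i : K →ₗ[R] L} {p : L →ₗ[R] M} (hi : Function.Injective i)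
    (hp : Function.Surjective p) (hip : Function.Exact i p) (hK : HasFreeResolution R N a K)
    (hM : HasFreeResolution R N b M) : HasFreeResolution R N (fun k => a k + b k) L := by
  induction N generalizing a b K L M with
  | zero =>
    obtain ⟨hK, ha⟩ := hK
    obtain ⟨hM, hb⟩ := hM
    refine ⟨subsingleton_of_forall_eq 0 fun x => ?_, fun k => by simp [ha, hb]⟩
    obtain ⟨k, rfl⟩ := (hip x).1 (Subsingleton.elim _ _)
    rw [Subsingleton.elim k 0, map_zero]
  | succ N ih =>
    obtain ⟨f, hf, hfker⟩ := hK
    obtain ⟨g, hg, hgker⟩ := hM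
    obtain ⟨l, rfl⟩ := Module.projective_lifting_property p g hp
    obtain ⟨j, r, hj, hr, hjr⟩ := exists_shortExact_ker_coprod hi hip hf l
    exact of_surjective ((LinearEquiv.funCongrLeft R R finSumFinEquiv).trans
      (LinearEquiv.sumArrowLequivProdArrow _ _ R R)) (surjective_coprod_of_exact hip hf hg)
      (ih hj hr hjr hfker hgker)

lemma mappingCone {c : ℕ → ℕ} {i : K →ₗ[R] L} {p : L →ₗ[R] M} (hi : Function.Injective i)
    (hp : Function.Surjective p) (hip : Function.Exact i p) (hK : HasFreeResolution R N a K)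
    (hL : HasFreeResolution R (N + 1) b L) (hc₀ : c 0 = b 0)
    (hc : ∀ k, c (k + 1) = b (k + 1) + a k) : HasFreeResolution R (N + 1) c M := by
  obtain ⟨f, hf, hker⟩ := hL
  obtain ⟨j, r, hj, hr, hjr⟩ := exists_shortExact_ker_comp hi hip hf
  refine of_surjective (LinearEquiv.funCongrLeft R R (finCongr hc₀.symm)) (f := p ∘ₗ f)
    (hp.comp hf) ?_
  simpa only [hc] using horseshoe hj hr hjr hker hK

lemma quotient_range {φ : M →ₗ[R] M} (hφ : Function.Injective φ) {m : ℕ}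
    (h : HasFreeResolution R N m.choose M) :
    HasFreeResolution R (N + 1) (m + 1).choose (M ⧸ LinearMap.range φ) :=
  mappingCone hφ (Submodule.mkQ_surjective _) (LinearMap.exact_map_mkQ_range φ) h h.succ
    (by simp) fun k => by rw [Nat.choose_succ_succ, add_comm]

lemma exists_exact (h : HasFreeResolution R N a M) :
    ∃ (d : ∀ k, (Fin (a (k + 1)) → R) →ₗ[R] (Fin (a k) → R)) (f : (Fin (a 0) → R) →ₗ[R] M),
      Function.Surjective f ∧ Function.Exact (d 0) f ∧ ∀ k, Function.Exact (d (k + 1)) (d k) := by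
  induction N generalizing a M with
  | zero =>
    obtain ⟨hM, ha⟩ := h
    have (k : ℕ) : Subsingleton (Fin (a k) → R) := by rw [ha]; infer_instance
    exact ⟨0, 0, fun x => ⟨0, Subsingleton.elim _ _⟩,
      fun x => iff_of_true rfl ⟨0, Subsingleton.elim _ _⟩,
      fun k x => iff_of_true rfl ⟨0, Subsingleton.elim _ _⟩⟩
  | succ N ih =>
    obtain ⟨f, hf, hker⟩ := h
    obtain ⟨d, g, hg, hdg, hd⟩ := ih hker
    refine ⟨fun
      | 0 => (LinearMap.ker f).subtype ∘ₗ g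
      | k + 1 => d k, f, hf, fun x => ?_, fun
      | 0 => fun x => ?_
      | k + 1 => hd k⟩
    · refine ⟨fun hx => ?_, by rintro ⟨y, rfl⟩; exact (g y).2⟩
      obtain ⟨y, hy⟩ := hg ⟨x, hx⟩
      exact ⟨y, congrArg Subtype.val hy⟩
    · exact (Subtype.ext_iff (a1 := g x) (a2 := 0)).symm.trans (hdg x)

end HasFreeResolution

/-- The projective resolution of `M` given by an exact sequence `⋯ ⟶ F 1 ⟶ F 0 ⟶ M ⟶ 0` of
modules with every `F k` projective. -/
def projectiveResolutionOfExact {F : ℕ → ModuleCat.{u} R} [∀ k, Projective (F k)]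
    {M : ModuleCat.{u} R} (d : ∀ k, F (k + 1) ⟶ F k) (f : F 0 ⟶ M) (hf : Function.Surjective f)
    (hdf : Function.Exact (d 0) f) (hd : ∀ k, Function.Exact (d (k + 1)) (d k)) :
    ProjectiveResolution M :=
  have hdd (k : ℕ) : d (k + 1) ≫ d k = 0 := by
    ext x
    exact (hd k).apply_apply_eq_zero x
  have hC (k : ℕ) : (ChainComplex.of F d hdd).d (k + 1) k = d k := ChainComplex.of_d F d k
  have hdf₀ : (ChainComplex.of F d hdd).d 1 0 ≫ f = 0 := by
    rw [hC]
    ext x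
    exact hdf.apply_apply_eq_zero x
  let π := (ChainComplex.toSingle₀Equiv (ChainComplex.of F d hdd) M).symm ⟨f, hdf₀⟩
  have hπ : π.f 0 = f := ChainComplex.toSingle₀Equiv_symm_apply_f_zero _ _
  { complex := ChainComplex.of F d hdd
    projective := fun k => inferInstanceAs (Projective (F k))
    π := π
    quasiIso := ⟨fun
      | 0 => by
        rw [ChainComplex.quasiIsoAt₀_iff, ShortComplex.quasiIso_iff_of_zeros' _ rfl rfl rfl,
          ShortComplex.ShortExact.moduleCat_exact_iff_function_exact]
        refine ⟨?_, (ModuleCat.epi_iff_surjective (π.f 0)).2 (hπ ▸ hf)⟩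
        change Function.Exact ((ChainComplex.of F d hdd).d 1 0) (π.f 0)
        rwa [hπ, hC]
      | k + 1 => by
        rw [quasiIsoAt_iff_exactAt' _ _ (ChainComplex.exactAt_succ_single_obj _ _),
          HomologicalComplex.exactAt_iff' _ (k + 2) (k + 1) k (by simp) (by simp),
          ShortComplex.ShortExact.moduleCat_exact_iff_function_exact]
        change Function.Exact ((ChainComplex.of F d hdd).d (k + 2) (k + 1))
          ((ChainComplex.of F d hdd).d (k + 1) k)
        rw [hC, hC]
        exact hd k⟩ }

theorem HasFreeResolution.exists_projectiveResolution {N : ℕ} {a : ℕ → ℕ} {M : ModuleCat.{u} R}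
    (h : HasFreeResolution R N a M) :
    ∃ P : ProjectiveResolution M, ∀ k, Nonempty (P.complex.X k ≃ₗ[R] (Fin (a k) → R)) := by
  obtain ⟨d, f, hf, hdf, hd⟩ := h.exists_exact
  exact ⟨projectiveResolutionOfExact (F := fun k => ModuleCat.of R (Fin (a k) → R))
    (fun k => ModuleCat.ofHom (d k)) (ModuleCat.ofHom f) hf hdf hd,
    fun k => ⟨LinearEquiv.refl R _⟩⟩

end FreeResolution

section RightRegular

variable {R : Type u} [Ring R]

lemma HasFreeResolution.self : HasFreeResolution R 1 (Nat.choose 0) R := by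
  refine .of_surjective (LinearEquiv.funUnique (Fin 1) R R) (f := LinearMap.id)
    Function.surjective_id ⟨?_, fun k => Nat.choose_zero_succ k⟩
  rw [LinearMap.ker_id]
  infer_instance

lemma HasFreeResolution.quotient_sup_span_singleton {N m : ℕ} {I : Submodule R R} {x : R}
    (hmul : ∀ r ∈ I, r * x ∈ I) (hreg : ∀ r, r * x ∈ I → r ∈ I)
    (h : HasFreeResolution R N m.choose (R ⧸ I)) :
    HasFreeResolution R (N + 1) (m + 1).choose (R ⧸ I ⊔ Ideal.span {x}) := by
  let φ : R ⧸ I →ₗ[R] R ⧸ I := Submodule.mapQ I I (LinearMap.toSpanSingleton R R x) hmul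
  have hφ : Function.Injective φ := by
    have hcomap : I.comap (LinearMap.toSpanSingleton R R x) = I := le_antisymm hreg hmul
    exact LinearMap.ker_eq_bot.1 <| (Submodule.ker_mapQ ..).trans <| hcomap.symm ▸ I.mkQ_map_self
  have hrange : LinearMap.range φ = Submodule.map I.mkQ (Ideal.span {x}) :=
    (Submodule.range_mapQ ..).trans (congrArg _ (LinearMap.range_toSpanSingleton x))
  exact (h.quotient_range hφ).congr ((Submodule.quotEquivOfEq _ _ hrange).trans
    (Submodule.quotientQuotientEquivQuotientSup I (Ideal.span {x})))

lemma mul_mem_span_of_forall_mem {S : Set R} {x : R} (h : ∀ s ∈ S, s * x ∈ Ideal.span S) :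
    ∀ r ∈ Ideal.span S, r * x ∈ Ideal.span S := by
  suffices Ideal.span S ≤ Submodule.comap (LinearMap.toSpanSingleton R R x) (Ideal.span S) from this
  exact Ideal.span_le.2 h

/-- A family `g` in a ring `R`, indexed by a linear order, such that right multiplication by `g j`
induces a well-defined and injective endomorphism of the left module `R ⧸ ∑ i > j, R * g i`. This
is the notion of regular sequence under which an iterated mapping cone resolves `R ⧸ ∑ i, R * g i`;
the largest index comes first. -/
structure IsRightRegularFamily {ι : Type*} [LinearOrder ι] (g : ι → R) : Prop where
  mul_mem : ∀ ⦃i j⦄, j < i → g i * g j ∈ Ideal.span (g '' Set.Ioi j)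
  mem_of_mul_mem : ∀ j r, r * g j ∈ Ideal.span (g '' Set.Ioi j) → r ∈ Ideal.span (g '' Set.Ioi j)

namespace IsRightRegularFamily

variable {ι : Type*} [LinearOrder ι] {g : ι → R}

lemma hasFreeResolution_of_isUpperSet (hg : IsRightRegularFamily g) (U : Finset ι)
    (hU : IsUpperSet (U : Set ι)) :
    HasFreeResolution R (U.card + 1) U.card.choose (R ⧸ Ideal.span (g '' U)) := by
  induction U using Finset.induction_on_min with
  | empty =>
    have : Ideal.span (g '' (∅ : Finset ι)) = (⊥ : Submodule R R) := by simp
    exact HasFreeResolution.self.congr (Submodule.quotEquivOfEqBot _ this).symm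
  | insert a s ha ih =>
    have hs : (s : Set ι) = Set.Ioi a := by
      ext i
      refine ⟨fun hi => ha i hi, fun hi => ?_⟩
      have : i ∈ insert a s := hU (le_of_lt hi) (Finset.mem_insert_self a s)
      exact (Finset.mem_insert.1 this).resolve_left (ne_of_gt hi)
    have hspan : Ideal.span (g '' s) ⊔ Ideal.span {g a} = Ideal.span (g '' ↑(insert a s)) := by
      rw [Finset.coe_insert, Set.image_insert_eq, Ideal.span_insert, sup_comm]
    rw [← hspan, Finset.card_insert_of_notMem fun h => (ha a h).false]
    have ih := ih (hs ▸ isUpperSet_Ioi a)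
    rw [hs] at ih ⊢
    exact ih.quotient_sup_span_singleton
      (mul_mem_span_of_forall_mem (Set.forall_mem_image.2 fun _ hi => hg.mul_mem hi))
      (hg.mem_of_mul_mem a)

theorem hasFreeResolution [Fintype ι] (hg : IsRightRegularFamily g) :
    HasFreeResolution R (Fintype.card ι + 1) (Fintype.card ι).choose
      (R ⧸ Ideal.span (Set.range g)) := by
  rw [← Set.image_univ, ← Finset.coe_univ]
  exact hg.hasFreeResolution_of_isUpperSet Finset.univ (by simp [isUpperSet_univ])

end IsRightRegularFamily

end RightRegular

section OrderedMonomial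

open Submodule Pointwise

variable {ι A : Type*} [LinearOrder ι]

/-- The ordered monomial `g i₁ * ⋯ * g iₙ` attached to the multiset `{i₁ ≤ ⋯ ≤ iₙ}` of indices. -/
def orderedMonomial [Monoid A] (g : ι → A) (s : Multiset ι) : A := (s.sort.map g).prod

section Monoid

variable [Monoid A] (g : ι → A)

@[simp]
lemma orderedMonomial_zero : orderedMonomial g 0 = 1 := by simp [orderedMonomial]

lemma orderedMonomial_cons_of_forall_le {j : ι} {s : Multiset ι} (h : ∀ i ∈ s, j ≤ i) :
    orderedMonomial g (j ::ₘ s) = g j * orderedMonomial g s := by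
  simp [orderedMonomial, Multiset.sort_cons _ _ _ h]

lemma orderedMonomial_cons_of_forall_ge {j : ι} {s : Multiset ι} (h : ∀ i ∈ s, i ≤ j) :
    orderedMonomial g (j ::ₘ s) = orderedMonomial g s * g j := by
  have hsort : (j ::ₘ s).sort = s.sort ++ [j] := by
    refine List.Perm.eq_of_pairwise' (r := (· ≤ ·)) (Multiset.pairwise_sort _ _) ?_ ?_
    · simpa [List.pairwise_append] using h
    · rw [← Multiset.coe_eq_coe, Multiset.sort_eq, ← Multiset.coe_add, Multiset.sort_eq,
        Multiset.coe_singleton, add_comm, Multiset.singleton_add]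
  simp [orderedMonomial, hsort]

end Monoid

lemma exists_eq_cons_of_exists_lt {s : Multiset ι} {j : ι} (h : ∃ i ∈ s, j < i) :
    ∃ l t, s = l ::ₘ t ∧ j < l ∧ ∀ i ∈ t, i ≤ l := by
  obtain ⟨i, hi, hji⟩ := h
  obtain ⟨l, hl, hmax⟩ := Multiset.exists_max_image id (s := s) (by rintro rfl; simp at hi)
  exact ⟨l, s.erase l, (Multiset.cons_erase hl).symm, hji.trans_le (hmax i hi),
    fun i hi => hmax i (Multiset.mem_of_mem_erase hi)⟩

variable {k : Type*} [CommRing k] [Ring A] [Algebra k A]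

theorem linearIndependent_orderedMonomial {V : Type*} [AddCommGroup V] [Module k V] {g : ι → A}
    (ρ : A →ₐ[k] Module.End k V) {v : Multiset ι → V} (hv : LinearIndependent k v)
    (hρ : ∀ j s, (∀ i ∈ s, j ≤ i) → ρ (g j) (v s) = v (j ::ₘ s)) :
    LinearIndependent k (orderedMonomial g) := by
  have hcyclic (l : List ι) (hl : l.Pairwise (· ≤ ·)) :
      ρ (orderedMonomial g l) (v 0) = v l := by
    induction l with
    | nil => simp
    | cons j l ih =>
      rw [List.pairwise_cons] at hl
      rw [← Multiset.cons_coe, orderedMonomial_cons_of_forall_le g hl.1, map_mul,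
        Module.End.mul_apply, ih hl.2, hρ j l hl.1]
  have hcomp : (LinearMap.applyₗ (v 0) ∘ₗ ρ.toLinearMap) ∘ orderedMonomial g = v := by
    funext s
    have hs := hcyclic s.sort (s.pairwise_sort _)
    rwa [Multiset.sort_eq] at hs
  exact LinearIndependent.of_comp (LinearMap.applyₗ (v 0) ∘ₗ ρ.toLinearMap) (by rwa [hcomp])

/-- The span of the ordered monomials of degree at most `d`. -/
def monomialFiltration (k : Type*) [CommRing k] [Algebra k A] (g : ι → A) (d : ℕ) :
    Submodule k A :=
  span k (orderedMonomial g '' {s | Multiset.card s ≤ d})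

/-- The family `g` can be straightened if every product `g i * g j` in the wrong order `j < i` is a
combination of products `a * g l` with `j < l` and `a` of degree at most one. -/
def CanStraighten (k : Type*) [CommRing k] [Algebra k A] (g : ι → A) : Prop :=
  ∀ ⦃i j⦄, j < i → g i * g j ∈ (1 ⊔ span k (Set.range g)) * span k (g '' Set.Ioi j)

variable {g : ι → A}

lemma canStraighten_of_forall_exists_eq
    (h : ∀ ⦃i j : ι⦄, j < i → ∃ (r s : k) (l : ι), j < l ∧ g i * g j = r • (g j * g i) - s • g l) :
    CanStraighten k g := by
  intro i j hji
  obtain ⟨r, s, l, hjl, heq⟩ := h hji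
  have hmem {i : ι} (hi : j < i) : g i ∈ span k (g '' Set.Ioi j) := subset_span ⟨i, hi, rfl⟩
  rw [heq, Submodule.sup_mul, one_mul]
  exact sub_mem
    (mem_sup_right (smul_mem _ r (mul_mem_mul (subset_span ⟨j, rfl⟩) (hmem hji))))
    (mem_sup_left (smul_mem _ s (hmem hjl)))

namespace CanStraighten

lemma orderedMonomial_mul_mem [WellFoundedGT ι] (hg : CanStraighten k g) {d : ℕ}
    (hd : ∀ c < d, monomialFiltration k g c * (1 ⊔ span k (Set.range g)) ≤
      monomialFiltration k g (c + 1)) (j : ι) {s : Multiset ι} (hs : Multiset.card s ≤ d) :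
    orderedMonomial g s * g j ∈ monomialFiltration k g (d + 1) := by
  induction j using WellFoundedGT.induction generalizing s with
  | ind j ih =>
    by_cases! hj : ∀ i ∈ s, i ≤ j
    · rw [← orderedMonomial_cons_of_forall_ge g hj]
      exact subset_span ⟨_, by simpa using hs, rfl⟩
    obtain ⟨l, t, rfl, hjl, ht⟩ := exists_eq_cons_of_exists_lt hj
    rw [Multiset.card_cons] at hs
    have htd : orderedMonomial g t ∈ monomialFiltration k g (Multiset.card t) :=
      subset_span ⟨t, le_refl (Multiset.card t), rfl⟩
    have hle : monomialFiltration k g (Multiset.card t) *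
        ((1 ⊔ span k (Set.range g)) * span k (g '' Set.Ioi j)) ≤
          monomialFiltration k g (d + 1) := by
      rw [← mul_assoc]
      refine (mul_le_mul_left (hd _ hs) _).trans ?_
      rw [monomialFiltration, span_mul_span, span_le]
      rintro _ ⟨_, ⟨r, hr, rfl⟩, _, ⟨i, hi, rfl⟩, rfl⟩
      exact ih i hi (hr.trans hs)
    rw [orderedMonomial_cons_of_forall_ge g ht, mul_assoc]
    exact hle (mul_mem_mul htd (hg hjl))

lemma monomialFiltration_mul_le [WellFoundedGT ι] (hg : CanStraighten k g) (d : ℕ) :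
    monomialFiltration k g d * (1 ⊔ span k (Set.range g)) ≤ monomialFiltration k g (d + 1) := by
  induction d using Nat.strong_induction_on with
  | h d ih =>
    rw [Submodule.mul_sup, mul_one, sup_le_iff]
    constructor
    · exact span_mono (Set.image_mono fun s (hs : _ ≤ d) => hs.trans d.le_succ)
    · rw [monomialFiltration, span_mul_span, span_le]
      rintro _ ⟨_, ⟨s, hs, rfl⟩, _, ⟨j, rfl⟩, rfl⟩
      exact hg.orderedMonomial_mul_mem ih j hs

theorem span_range_orderedMonomial [WellFoundedGT ι] (hg : CanStraighten k g)
    (htop : Algebra.adjoin k (Set.range g) = ⊤) :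
    span k (Set.range (orderedMonomial g)) = ⊤ := by
  rw [eq_top_iff, ← Algebra.top_toSubmodule, ← htop, Algebra.adjoin_eq_span, span_le]
  intro a ha
  induction ha using Submonoid.closure_induction_right with
  | one => exact subset_span ⟨0, orderedMonomial_zero g⟩
  | mul_right a _ b hb ih =>
    obtain ⟨j, rfl⟩ := hb
    suffices span k (Set.range (orderedMonomial g)) * span k {g j} ≤
        span k (Set.range (orderedMonomial g)) from
      this (mul_mem_mul ih (mem_span_singleton_self _))
    rw [span_mul_span, span_le]
    rintro _ ⟨_, ⟨s, rfl⟩, _, rfl, rfl⟩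
    exact span_mono (Set.image_subset_range _ _) <| hg.orderedMonomial_mul_mem
      (fun c _ => hg.monomialFiltration_mul_le c) j le_rfl

lemma mul_mem_span_orderedMonomial [WellFoundedGT ι] (hg : CanStraighten k g)
    (htop : span k (Set.range (orderedMonomial g)) = ⊤) (a : A) (j : ι) :
    a * g j ∈ span k (orderedMonomial g '' {s | ∃ i ∈ s, j ≤ i}) := by
  induction j using WellFoundedGT.induction generalizing a with
  | ind j ih =>
    suffices span k (Set.range (orderedMonomial g)) * span k {g j} ≤
        span k (orderedMonomial g '' {s | ∃ i ∈ s, j ≤ i}) from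
      this (mul_mem_mul (htop ▸ mem_top) (mem_span_singleton_self _))
    rw [span_mul_span, span_le]
    rintro _ ⟨_, ⟨s, rfl⟩, _, rfl, rfl⟩
    by_cases! hj : ∀ i ∈ s, i ≤ j
    · exact subset_span ⟨j ::ₘ s, ⟨j, Multiset.mem_cons_self j s, le_rfl⟩,
        orderedMonomial_cons_of_forall_ge g hj⟩
    obtain ⟨l, t, rfl, hjl, ht⟩ := exists_eq_cons_of_exists_lt hj
    have hle : (⊤ : Submodule k A) * ((1 ⊔ span k (Set.range g)) * span k (g '' Set.Ioi j)) ≤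
        span k (orderedMonomial g '' {s | ∃ i ∈ s, j ≤ i}) := by
      rw [← mul_assoc]
      refine (mul_le_mul_left le_top _).trans ?_
      rw [← span_univ, span_mul_span, span_le]
      rintro _ ⟨b, -, _, ⟨i, hi, rfl⟩, rfl⟩
      refine span_mono (Set.image_mono ?_) (ih i hi b)
      exact fun s ⟨l, hl, hil⟩ => ⟨l, hl, (le_of_lt hi).trans hil⟩
    rw [orderedMonomial_cons_of_forall_ge g ht]
    simpa only [mul_assoc, SetLike.mem_coe] using hle (mul_mem_mul mem_top (hg hjl))

lemma mem_span_image_Ioi_iff [WellFoundedGT ι] (hg : CanStraighten k g)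
    (htop : span k (Set.range (orderedMonomial g)) = ⊤) (j : ι) (a : A) :
    a ∈ Ideal.span (g '' Set.Ioi j) ↔ a ∈ span k (orderedMonomial g '' {s | ∃ i ∈ s, j < i}) := by
  constructor
  · intro ha
    induction ha using closure_induction with
    | zero => exact zero_mem _
    | add a b _ _ ha hb => exact add_mem ha hb
    | smul_mem r a ha =>
      obtain ⟨i, hji, rfl⟩ := ha
      refine span_mono (Set.image_mono ?_) (hg.mul_mem_span_orderedMonomial htop r i)
      exact fun s ⟨l, hl, hil⟩ => ⟨l, hl, lt_of_lt_of_le hji hil⟩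
  · suffices span k (orderedMonomial g '' {s | ∃ i ∈ s, j < i}) ≤
        (Ideal.span (g '' Set.Ioi j)).restrictScalars k from fun ha => this ha
    rw [span_le]
    rintro _ ⟨s, hs, rfl⟩
    obtain ⟨l, t, rfl, hjl, ht⟩ := exists_eq_cons_of_exists_lt hs
    rw [orderedMonomial_cons_of_forall_ge g ht]
    exact Ideal.mul_mem_left _ _ (Ideal.subset_span ⟨l, hjl, rfl⟩)

lemma mul_mem_span_image_Ioi (hg : CanStraighten k g) {i j : ι} (hij : j < i) :
    g i * g j ∈ Ideal.span (g '' Set.Ioi j) := by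
  suffices (1 ⊔ span k (Set.range g)) * span k (g '' Set.Ioi j) ≤
      (Ideal.span (g '' Set.Ioi j)).restrictScalars k from this (hg hij)
  rw [mul_le]
  intro a _ b hb
  exact Ideal.mul_mem_left _ a (span_le_restrictScalars k A _ hb)

lemma repr_mul_cons [WellFoundedGT ι] (hg : CanStraighten k g) (b : Module.Basis (Multiset ι) k A)
    (hb : ⇑b = orderedMonomial g) (a : A) {j : ι} {s : Multiset ι} (hs : ∀ i ∈ s, i ≤ j) :
    b.repr (a * g j) (j ::ₘ s) = b.repr a s := by
  have htop : span k (Set.range (orderedMonomial g)) = ⊤ := hb ▸ b.span_eq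
  suffices Finsupp.lapply (j ::ₘ s) ∘ₗ b.repr.toLinearMap ∘ₗ LinearMap.mulRight k (g j) =
      Finsupp.lapply s ∘ₗ b.repr.toLinearMap from LinearMap.congr_fun this a
  refine b.ext fun t => ?_
  by_cases! ht : ∀ i ∈ t, i ≤ j
  · have hbt : b t * g j = b (j ::ₘ t) := by
      rw [hb, orderedMonomial_cons_of_forall_ge g ht]
    simp [hbt, Finsupp.single_apply]
  · have hts : t ≠ s := by
      rintro rfl
      obtain ⟨i, hi, hji⟩ := ht
      exact (hs i hi).not_gt hji
    have hmem : b t * g j ∈ span k (b '' {s | ∃ i ∈ s, j < i}) := by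
      rw [hb, ← hg.mem_span_image_Ioi_iff htop]
      refine mul_mem_span_of_forall_mem
        (Set.forall_mem_image.2 fun _ => hg.mul_mem_span_image_Ioi) _
        ((hg.mem_span_image_Ioi_iff htop j _).2 ?_)
      exact subset_span ⟨t, ht, rfl⟩
    have hnot : j ::ₘ s ∉ (b.repr (b t * g j)).support := fun h => by
      obtain ⟨i, hi, hji⟩ := b.mem_span_image.1 hmem h
      rcases Multiset.mem_cons.1 hi with rfl | hi
      exacts [hji.false, (hs i hi).not_gt hji]
    simpa [hts] using hnot

theorem isRightRegularFamily [WellFoundedGT ι] (hg : CanStraighten k g)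
    (hadj : Algebra.adjoin k (Set.range g) = ⊤)
    (hli : LinearIndependent k (orderedMonomial g)) : IsRightRegularFamily g where
  mul_mem _ _ := hg.mul_mem_span_image_Ioi
  mem_of_mul_mem j a ha := by
    have htop := hg.span_range_orderedMonomial hadj
    let b := Module.Basis.mk hli htop.ge
    have hb : ⇑b = orderedMonomial g := Module.Basis.coe_mk ..
    rw [hg.mem_span_image_Ioi_iff htop, ← hb, b.mem_span_image] at ha ⊢
    intro s hs
    by_contra hj
    replace hj : ∀ i ∈ s, i ≤ j := by simpa using hj
    rw [Finset.mem_coe, Finsupp.mem_support_iff, ← hg.repr_mul_cons b hb a hj,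
      ← Finsupp.mem_support_iff] at hs
    obtain ⟨i, hi, hji⟩ := ha hs
    rcases Multiset.mem_cons.1 hi with rfl | hi
    exacts [hji.false, (hj i hi).not_gt hji]

end CanStraighten

lemma ker_eq_span_range_of_adjoin_eq_top {ι k A : Type*} [CommRing k] [Ring A] [Algebra k A]
    {g : ι → A} (hadj : Algebra.adjoin k (Set.range g) = ⊤) (ε : A →ₐ[k] k)
    (hε : ∀ i, ε (g i) = 0) : RingHom.ker ε = Ideal.span (Set.range g) := by
  refine le_antisymm (fun a ha => ?_) (Ideal.span_le.2 (Set.range_subset_iff.2 hε))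
  suffices ∀ a ∈ Algebra.adjoin k (Set.range g),
      a - algebraMap k A (ε a) ∈ Ideal.span (Set.range g) by
    simpa [RingHom.mem_ker.1 ha] using this a (hadj ▸ Algebra.mem_top)
  intro a ha
  induction ha using Algebra.adjoin_induction with
  | mem _ h =>
    obtain ⟨i, rfl⟩ := h
    simpa [hε] using Ideal.subset_span (Set.mem_range_self i)
  | algebraMap r => simp
  | add a b _ _ ha hb =>
    rw [map_add, map_add, add_sub_add_comm]
    exact add_mem ha hb
  | mul a b _ _ ha hb =>
    have hsplit : a * b - algebraMap k A (ε (a * b)) =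
        a * (b - algebraMap k A (ε b)) + algebraMap k A (ε b) * (a - algebraMap k A (ε a)) := by
      rw [map_mul, map_mul, mul_sub, mul_sub, Algebra.commutes (ε b) a,
        Algebra.commutes (ε b) (algebraMap k A (ε a))]
      abel
    rw [hsplit]
    exact add_mem (Ideal.mul_mem_left _ _ hb) (Ideal.mul_mem_left _ _ ha)

end OrderedMonomial

section BlockShift

variable {ι G k : Type*} [DecidableEq ι] [AddCommGroup G] [CommSemiring k]

/-- The weighted shift `[e] ↦ w (e i) • [e + a]` of the `i`-th coordinate, on the free module with
basis the functions `e : ι → G`. -/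
def blockShift (i : ι) (w : G → k) (a : G) : Module.End k ((ι → G) →₀ k) :=
  Finsupp.linearCombination k fun e => Finsupp.single (e + Pi.single i a) (w (e i))

@[simp]
lemma blockShift_single (i : ι) (w : G → k) (a : G) (e : ι → G) (r : k) :
    blockShift i w a (Finsupp.single e r) = Finsupp.single (e + Pi.single i a) (r * w (e i)) := by
  simp [blockShift]

lemma blockShift_mul_blockShift (i : ι) (w w' : G → k) (a a' : G) :
    blockShift i w a * blockShift i w' a' =
      blockShift i (fun u => w' u * w (u + a')) (a' + a) := by
  ext e : 3
  simp [add_assoc, Pi.single_add]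

lemma commute_blockShift {i j : ι} (hij : i ≠ j) (w w' : G → k) (a a' : G) :
    Commute (blockShift i w a) (blockShift j w' a') := by
  ext e : 3
  simp [hij, hij.symm, mul_comm, add_right_comm]

lemma smul_blockShift (r : k) (i : ι) (w : G → k) (a : G) :
    r • blockShift i w a = blockShift i (fun u => r * w u) a := by
  ext e : 3
  simp

lemma blockShift_add (i : ι) (w w' : G → k) (a : G) :
    blockShift i (fun u => w u + w' u) a = blockShift i w a + blockShift i w' a := by
  ext e : 3
  simp

end BlockShift

section QInt

variable {k : Type*} [Field k]

open Classical in
/-- The symmetric `q`-analogue `q ^ a + q ^ (a - 2) + ⋯ + q ^ (2 - a)` of the integer `a`, extended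
to negative `a`. -/
def qInt (q : k) (a : ℤ) : k :=
  if q ^ 2 = 1 then a * q ^ a else q ^ 2 * (q ^ a - q ^ (-a)) / (q ^ 2 - 1)

@[simp]
lemma qInt_zero (q : k) : qInt q 0 = 0 := by simp [qInt]

lemma qInt_add_one {q : k} (hq : q ≠ 0) (a : ℤ) :
    qInt q (a + 1) = q * qInt q a + q ^ (1 - a) := by
  unfold qInt
  split_ifs with h
  · have hinv : q⁻¹ = q := inv_eq_of_mul_eq_one_left (by rw [← sq, h])
    have hneg : q ^ (1 - a) = q ^ (a + 1) := by
      rw [← neg_sub, zpow_neg, ← inv_zpow, hinv, zpow_sub_one₀ hq, zpow_add_one₀ hq, hinv]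
    rw [hneg, zpow_add_one₀ hq]
    push_cast
    ring
  · have h' : q ^ 2 - 1 ≠ 0 := sub_ne_zero.2 h
    rw [← neg_sub a 1, zpow_neg, zpow_neg, zpow_neg, zpow_add_one₀ hq, zpow_sub_one₀ hq]
    field_simp
    ring

end QInt

namespace QHeisenberg

variable {n : ℕ} {q : ℂ}

/-- The action of `x_i` on the Laurent monomials `x ^ a * y ^ b * z ^ c`, encoded by their exponents
`fun i => ![a i, b i, c i]`. -/
def laurentX (i : Fin n) : Module.End ℂ ((Fin n → Fin 3 → ℤ) →₀ ℂ) :=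
  blockShift i (fun _ => 1) (Pi.single 0 1)

/-- The action of `y_i` on Laurent monomials, dictated by
`y_i * x_i ^ a = q ^ a • x_i ^ a * y_i - qInt q a • x_i ^ (a - 1) * z_i`. -/
def laurentY (q : ℂ) (i : Fin n) : Module.End ℂ ((Fin n → Fin 3 → ℤ) →₀ ℂ) :=
  blockShift i (fun u : Fin 3 → ℤ => q ^ u 0) (Pi.single 1 1) +
    blockShift i (fun u : Fin 3 → ℤ => -(qInt q (u 0) * q ^ u 1)) (Pi.single 2 1 - Pi.single 0 1)

/-- The action of `z_i` on Laurent monomials. -/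
def laurentZ (q : ℂ) (i : Fin n) : Module.End ℂ ((Fin n → Fin 3 → ℤ) →₀ ℂ) :=
  blockShift i (fun u : Fin 3 → ℤ => q ^ (u 1 - u 0)) (Pi.single 2 1)

lemma laurentX_mul_laurentZ (hq : q ≠ 0) (i : Fin n) :
    laurentX i * laurentZ q i = q • (laurentZ q i * laurentX i) := by
  rw [laurentX, laurentZ, blockShift_mul_blockShift, blockShift_mul_blockShift, smul_blockShift,
    add_comm]
  congr 1 with u
  simp only [mul_one, one_mul, Pi.add_apply, ne_eq, one_ne_zero, not_false_eq_true,
    Pi.single_eq_of_ne, Pi.single_eq_same, add_zero, sub_add_eq_sub_sub, zpow_sub_one₀ hq]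
  field_simp

lemma laurentY_mul_laurentZ (hq : q ≠ 0) (i : Fin n) :
    laurentY q i * laurentZ q i = q⁻¹ • (laurentZ q i * laurentY q i) := by
  simp only [laurentY, laurentZ, add_mul, mul_add, smul_add, blockShift_mul_blockShift,
    smul_blockShift]
  congr 2
  · ext u
    simp only [Pi.add_apply, ne_eq, Fin.reduceEq, zero_ne_one, not_false_eq_true,
      Pi.single_eq_of_ne, Pi.single_eq_same, add_zero, zpow_sub₀ hq, zpow_add_one₀ hq]
    field_simp
  · exact add_comm _ _
  · ext u
    simp only [Pi.add_apply, Pi.sub_apply, ne_eq, Fin.reduceEq, one_ne_zero, not_false_eq_true,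
      Pi.single_eq_of_ne, Pi.single_eq_same, add_zero, sub_self, zero_sub, zpow_sub₀ hq,
      zpow_add₀ hq, zpow_neg_one]
    field_simp
  · exact add_comm _ _

lemma laurentX_mul_laurentY (hq : q ≠ 0) (i : Fin n) :
    laurentX i * laurentY q i = q⁻¹ • (laurentY q i * laurentX i) + laurentZ q i := by
  have hweight (u : Fin 3 → ℤ) : -(qInt q (u 0) * q ^ u 1) =
      q⁻¹ * -(qInt q (u 0 + 1) * q ^ u 1) + q ^ (u 1 - u 0) := by
    rw [qInt_add_one hq, zpow_sub₀ hq, zpow_sub₀ hq]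
    field_simp
    simp
  simp only [laurentX, laurentY, laurentZ, add_mul, mul_add, smul_add, blockShift_mul_blockShift,
    smul_blockShift, add_assoc]
  congr 1
  · congr 1
    · ext u
      simp only [Pi.add_apply, Pi.single_eq_same, mul_one, one_mul, zpow_add_one₀ hq]
      field_simp
    · exact add_comm _ _
  · simp [hweight, blockShift_add]

lemma commute_laurentOp (q : ℂ) {i j : Fin n} (hij : i ≠ j) (c d : Fin 3) :
    Commute (![laurentX, laurentY q, laurentZ q] c i)
      (![laurentX, laurentY q, laurentZ q] d j) := by
  have hX {i j : Fin n} (hij : i ≠ j) (w a) : Commute (laurentX i) (blockShift j w a) :=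
    commute_blockShift hij _ w _ a
  have hY {i j : Fin n} (hij : i ≠ j) (w a) : Commute (laurentY q i) (blockShift j w a) :=
    (commute_blockShift hij _ w _ a).add_left (commute_blockShift hij _ w _ a)
  have hXX : Commute (laurentX i) (laurentX j) := hX hij _ _
  have hXY {i j : Fin n} (hij : i ≠ j) : Commute (laurentX i) (laurentY q j) :=
    (hX hij _ _).add_right (hX hij _ _)
  have hXZ {i j : Fin n} (hij : i ≠ j) : Commute (laurentX i) (laurentZ q j) := hX hij _ _
  have hYY : Commute (laurentY q i) (laurentY q j) := (hY hij _ _).add_right (hY hij _ _)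
  have hYZ {i j : Fin n} (hij : i ≠ j) : Commute (laurentY q i) (laurentZ q j) := hY hij _ _
  have hZZ : Commute (laurentZ q i) (laurentZ q j) := commute_blockShift hij _ _ _ _
  fin_cases c <;> fin_cases d
  exacts [hXX, hXY hij, hXZ hij, (hXY hij.symm).symm, hYY, hYZ hij, (hXZ hij.symm).symm,
    (hYZ hij.symm).symm, hZZ]

/-- The action of `𝔥_n(q)` on Laurent monomials. -/
def laurentRep (hq : q ≠ 0) :
    H n q →ₐ[ℂ] Module.End ℂ ((Fin n → Fin 3 → ℤ) →₀ ℂ) :=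
  RingQuot.liftAlgHom ℂ
    ⟨FreeAlgebra.lift ℂ (Sum.elim laurentX (Sum.elim (laurentY q) (laurentZ q))), by
      have hcomm (c : Fin 3) (i j : Fin n) :
          Commute (![laurentX, laurentY q, laurentZ q] c i)
            (![laurentX, laurentY q, laurentZ q] c j) := by
        obtain rfl | hij := eq_or_ne i j
        exacts [Commute.refl _, commute_laurentOp q hij c c]
      rintro _ _ (⟨i, j⟩ | ⟨i, j⟩ | ⟨i, j⟩ | i | i | i | ⟨i, j, hij⟩ | ⟨i, j, hij⟩ | ⟨i, j, hij⟩)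
      · simpa [fX] using (hcomm 0 i j).eq
      · simpa [fY] using (hcomm 1 i j).eq
      · simpa [fZ] using (hcomm 2 i j).eq
      · simpa [fX, fZ] using laurentX_mul_laurentZ hq i
      · simpa [fY, fZ] using laurentY_mul_laurentZ hq i
      · simpa [fX, fY, fZ] using laurentX_mul_laurentY hq i
      · simpa [fX, fY] using (commute_laurentOp q hij 0 1).eq
      · simpa [fX, fZ] using (commute_laurentOp q hij 0 2).eq
      · simpa [fY, fZ] using (commute_laurentOp q hij 1 2).eq⟩

/-- The generators of `𝔥_n(q)` as one family. Its lexicographic index type lists `x_1`, `y_1`,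
`z_1`, `x_2`, `y_2`, `z_2`, and so on, in increasing order. -/
def generator (n : ℕ) (q : ℂ) (p : Fin n ×ₗ Fin 3) : H n q :=
  ![X n q, Y n q, Z n q] (ofLex p).2 (ofLex p).1

@[simp]
lemma laurentRep_generator (hq : q ≠ 0) (i : Fin n) (c : Fin 3) :
    laurentRep hq (generator n q (toLex (i, c))) = ![laurentX, laurentY q, laurentZ q] c i := by
  fin_cases c <;> simp [laurentRep, generator, X, Y, Z, fX, fY, fZ]

lemma X_mul_Z (i : Fin n) : X n q i * Z n q i = q • (Z n q i * X n q i) := by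
  simpa [X, Z] using RingQuot.mkAlgHom_rel ℂ (Rel.xz (q := q) i)

lemma Y_mul_Z (i : Fin n) : Y n q i * Z n q i = q⁻¹ • (Z n q i * Y n q i) := by
  simpa [Y, Z] using RingQuot.mkAlgHom_rel ℂ (Rel.yz (q := q) i)

lemma X_mul_Y (i : Fin n) : X n q i * Y n q i = q⁻¹ • (Y n q i * X n q i) + Z n q i := by
  simpa [X, Y, Z] using RingQuot.mkAlgHom_rel ℂ (Rel.xy (q := q) i)

lemma commute_generator {i j : Fin n} (hij : i ≠ j) (c d : Fin 3) :
    Commute (generator n q (toLex (i, c))) (generator n q (toLex (j, d))) := by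
  have hrel {a b} (h : Rel n q (a * b) (b * a)) :
      Commute (RingQuot.mkAlgHom ℂ (Rel n q) a) (RingQuot.mkAlgHom ℂ (Rel n q) b) := by
    rw [commute_iff_eq, ← map_mul, RingQuot.mkAlgHom_rel ℂ h, map_mul]
  fin_cases c <;> fin_cases d
  exacts [hrel (.xx i j), hrel (.xyne i j hij), hrel (.xzne i j hij),
    (hrel (.xyne j i hij.symm)).symm, hrel (.yy i j), hrel (.yzne i j hij),
    (hrel (.xzne j i hij.symm)).symm, (hrel (.yzne j i hij.symm)).symm, hrel (.zz i j)]

lemma adjoin_range_generator : Algebra.adjoin ℂ (Set.range (generator n q)) = ⊤ := by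
  have hsurj := RingQuot.mkAlgHom_surjective ℂ (Rel n q)
  rw [eq_top_iff, ← (AlgHom.range_eq_top _).2 hsurj, ← Algebra.map_top,
    ← FreeAlgebra.adjoin_range_ι, AlgHom.map_adjoin, ← Set.range_comp]
  refine Algebra.adjoin_mono ?_
  rintro _ ⟨i | i | i, rfl⟩
  exacts [⟨toLex (i, 0), rfl⟩, ⟨toLex (i, 1), rfl⟩, ⟨toLex (i, 2), rfl⟩]

lemma eps_generator (i : Fin n) (c : Fin 3) : eps n q (generator n q (toLex (i, c))) = 0 := by
  fin_cases c <;> simp [eps, generator, X, Y, Z, fX, fY, fZ]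

lemma canStraighten_generator (hq : q ≠ 0) : CanStraighten ℂ (generator n q) := by
  refine canStraighten_of_forall_exists_eq ?_
  rintro ⟨i, c⟩ ⟨j, d⟩ hlt
  obtain hji | ⟨rfl, hdc⟩ := Prod.Lex.toLex_lt_toLex.1 hlt
  · refine ⟨1, 0, _, hlt, ?_⟩
    rw [one_smul, zero_smul, sub_zero]
    exact commute_generator hji.ne' c d
  have hYX : Y n q j * X n q j = q • (X n q j * Y n q j) - q • Z n q j := by
    rw [X_mul_Y, smul_add, smul_inv_smul₀ hq, add_sub_cancel_right]
  have hZX : Z n q j * X n q j = q⁻¹ • (X n q j * Z n q j) := by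
    rw [X_mul_Z, inv_smul_smul₀ hq]
  have hZY : Z n q j * Y n q j = q • (Y n q j * Z n q j) := by
    rw [Y_mul_Z, smul_inv_smul₀ hq]
  match c, d, hdc with
  | 1, 0, _ =>
    exact ⟨q, q, toLex (j, 2), Prod.Lex.toLex_lt_toLex.2 (.inr ⟨rfl, Fin.succ_pos 1⟩), hYX⟩
  | 2, 0, _ => exact ⟨q⁻¹, 0, _, hlt, by rw [zero_smul, sub_zero]; exact hZX⟩
  | 2, 1, _ => exact ⟨q, 0, _, hlt, by rw [zero_smul, sub_zero]; exact hZY⟩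

lemma linearIndependent_orderedMonomial_generator (hq : q ≠ 0) :
    LinearIndependent ℂ (orderedMonomial (generator n q)) := by
  let exponent (s : Multiset (Fin n ×ₗ Fin 3)) (i : Fin n) (c : Fin 3) : ℤ := s.count (toLex (i, c))
  have hexponent : exponent.Injective := by
    intro s t hst
    ext ⟨i, c⟩
    exact Nat.cast_injective (congr_fun₂ hst i c)
  have hcons (i : Fin n) (c : Fin 3) (s) :
      exponent (toLex (i, c) ::ₘ s) = exponent s + Pi.single i (Pi.single c 1) := by
    ext j d
    obtain rfl | hij := eq_or_ne j i
    · obtain rfl | hcd := eq_or_ne d c <;> simp [exponent, *]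
    · simp [exponent, *]
  refine linearIndependent_orderedMonomial (laurentRep hq)
    ((Finsupp.linearIndependent_single_one ℂ (Fin n → Fin 3 → ℤ)).comp exponent hexponent) ?_
  rintro ⟨i, c⟩ s hs
  have hzero (d : Fin 3) (hdc : d < c) : exponent s i d = 0 := by
    refine Nat.cast_eq_zero.2 (Multiset.count_eq_zero.2 fun hmem => ?_)
    exact (hs _ hmem).not_gt (Prod.Lex.toLex_lt_toLex.2 (.inr ⟨rfl, hdc⟩))
  change laurentRep hq (generator n q (toLex (i, c))) (Finsupp.single (exponent s) 1) =
    Finsupp.single (exponent (toLex (i, c) ::ₘ s)) 1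
  rw [laurentRep_generator, hcons]
  match c with
  | 0 => simp [laurentX]
  | 1 => simp [laurentY, hzero]
  | 2 => simp [laurentZ, hzero]

lemma isRightRegularFamily_generator (hq : q ≠ 0) : IsRightRegularFamily (generator n q) :=
  (canStraighten_generator hq).isRightRegularFamily adjoin_range_generator
    (linearIndependent_orderedMonomial_generator hq)

/-- The augmentation `𝔥_n(q) → ℂ_ε` as a homomorphism of left modules. -/
def augmentation (n : ℕ) (q : ℂ) : H n q →ₗ[H n q] trivMod n q where
  toFun := eps n q
  map_add' := map_add (eps n q)
  map_smul' := map_mul (eps n q)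

lemma ker_augmentation :
    LinearMap.ker (augmentation n q) = Ideal.span (Set.range (generator n q)) :=
  ker_eq_span_range_of_adjoin_eq_top adjoin_range_generator (eps n q) fun _ => eps_generator _ _

lemma augmentation_surjective : Function.Surjective (augmentation n q) := fun r =>
  ⟨algebraMap ℂ (H n q) r, (eps n q).commutes r⟩

lemma hasFreeResolution_trivMod (hq : q ≠ 0) :
    HasFreeResolution (H n q) (3 * n + 1) (3 * n).choose (trivMod n q) := by
  have h := (isRightRegularFamily_generator (n := n) hq).hasFreeResolution
  rw [← ker_augmentation] at h
  simpa [mul_comm] using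
    h.congr ((augmentation n q).quotKerEquivOfSurjective augmentation_surjective)

theorem koszul_type_resolution_general (n : ℕ) (q : ℂ) (hq : q ≠ 0) :
    ∃ P : ProjectiveResolution (trivMod n q),
      ∀ k : ℕ,
        Nonempty ((P.complex.X k) ≃ₗ[H n q] (Fin (Nat.choose (3 * n) k) → H n q)) :=
  (hasFreeResolution_trivMod hq).exists_projectiveResolution

/-- For `n ≥ 1` and `q` nonzero and not a root of unity, the trivial
module `ℂ_ε` admits a free resolution of length `3n` whose `k`-th term is a free left
`𝔥_n(q)`-module of rank `(3n).choose k` (in particular the terms vanish in degrees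
above `3n`, since the rank is `0` there). -/
theorem koszul_type_resolution (n : ℕ) (hn : 1 ≤ n) (q : ℂ) (hq : q ≠ 0)
    (hq' : NotRootOfUnity q) :
    ∃ P : ProjectiveResolution (trivMod n q),
      ∀ k : ℕ,
        Nonempty ((P.complex.X k) ≃ₗ[H n q] (Fin (Nat.choose (3 * n) k) → H n q)) :=
  koszul_type_resolution_general n q hq

end QHeisenberg
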